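/- Assume the family Ψ_n satisfies properties (P1), (P3), (P4). Then for each n ≥ 1 and each i = 1,…,n: Z_n(…, x_i = −β₁, …) = Z_n(…, x_i = β₁, …) = 0, Z_n(…, x_i = −β₃, …) = Z_n(…, x_i = −β₄, …) = 0, and Z̄_n^±(…, x_i = −β₁, …) = Z̄_n^±(…, x_i = −β₂, …) = 0, where β₁ = η, β₂ = η + π/2, β₃ = η + π/2 + πτ/2, β₄ = η + πτ/2. -/

import Mathlib

noncomputable section

open Complex
open scoped BigOperators

/-- Jacobi theta function `ϑ₁(z|τ)` with nome `p = e^{iπτ}` (Whittaker–Watson convention). -/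
def th1 (z τ : ℂ) : ℂ :=
  -Complex.I * ∑' n : ℤ, (-1 : ℂ) ^ n *
    Complex.exp ((Real.pi : ℂ) * Complex.I * τ * ((n : ℂ) + 1/2) ^ 2 + (2 * (n : ℂ) + 1) * Complex.I * z)

/-- Jacobi theta function `ϑ₂(z|τ)`. -/
def th2 (z τ : ℂ) : ℂ :=
  ∑' n : ℤ,
    Complex.exp ((Real.pi : ℂ) * Complex.I * τ * ((n : ℂ) + 1/2) ^ 2 + (2 * (n : ℂ) + 1) * Complex.I * z)

/-- Jacobi theta function `ϑ₃(z|τ)`. -/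
def th3 (z τ : ℂ) : ℂ :=
  ∑' n : ℤ, Complex.exp ((Real.pi : ℂ) * Complex.I * τ * (n : ℂ) ^ 2 + 2 * (n : ℂ) * Complex.I * z)

/-- Jacobi theta function `ϑ₄(z|τ)`. -/
def th4 (z τ : ℂ) : ℂ :=
  ∑' n : ℤ, (-1 : ℂ) ^ n *
    Complex.exp ((Real.pi : ℂ) * Complex.I * τ * (n : ℂ) ^ 2 + 2 * (n : ℂ) * Complex.I * z)

/-- The crossing parameter `η = π/3`. -/
def ηc : ℂ := (Real.pi : ℂ) / 3

/-- The elliptic nome `p = e^{iπτ}`. -/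
def pnome (τ : ℂ) : ℂ := Complex.exp ((Real.pi : ℂ) * Complex.I * τ)

/-- `ζ = (ϑ₁(η,p²)/ϑ₄(η,p²))²`. -/
def zet (τ : ℂ) : ℂ := (th1 ηc (2 * τ) / th4 ηc (2 * τ)) ^ 2

/-- The nome `p` is real with `0 < p < 1`. -/
def preal (τ : ℂ) : Prop := (pnome τ).im = 0 ∧ 0 < (pnome τ).re ∧ (pnome τ).re < 1

/-- A tuple given by a list of prescribed entries, padded by zeros. -/
def padded {n : ℕ} (l : List ℂ) : Fin n → ℂ := fun j => l.getD (j : ℕ) 0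

/-- Extension of a tuple by a list of prescribed further entries (padded by zeros). -/
def extL {m n : ℕ} (w : Fin m → ℂ) (l : List ℂ) : Fin n → ℂ :=
  fun j => if h : (j : ℕ) < m then w ⟨j, h⟩ else l.getD ((j : ℕ) - m) 0

/-- First `k` entries of a `2k`-tuple. -/
def firstHalf {k : ℕ} (x : Fin (2 * k) → ℂ) : Fin k → ℂ :=
  fun i => x ⟨(i : ℕ), by have := i.2; omega⟩

/-- Last `k` entries of a `2k`-tuple. -/
def secondHalf {k : ℕ} (x : Fin (2 * k) → ℂ) : Fin k → ℂ :=
  fun i => x ⟨k + (i : ℕ), by have := i.2; omega⟩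

/-- `𝕙(x,y) = ϑ₁(x−y+η)ϑ₁(x−y−η)ϑ₁(x+y+η)ϑ₁(x+y−η)`. -/
def hh (τ x y : ℂ) : ℂ :=
  th1 (x - y + ηc) τ * th1 (x - y - ηc) τ * th1 (x + y + ηc) τ * th1 (x + y - ηc) τ

/-- `𝔻(x₁,…,x_k) = ∏_{i<j} ϑ₁(x_j−x_i)ϑ₁(x_j+x_i)`. -/
def vdTheta (τ : ℂ) {k : ℕ} (y : Fin k → ℂ) : ℂ :=
  ∏ i : Fin k, ∏ j : Fin k, if i < j then th1 (y j - y i) τ * th1 (y j + y i) τ else 1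

/-- The elliptic Tsuchiya determinant `ℍ_{2k}(x₁,…,x_k; x_{k+1},…,x_{2k})`. -/
def tsuchiya (τ : ℂ) (k : ℕ) (x : Fin (2 * k) → ℂ) : ℂ :=
  (∏ i : Fin k, ∏ j : Fin k, hh τ (firstHalf x i) (secondHalf x j))
    / (vdTheta τ (firstHalf x) * vdTheta τ (secondHalf x))
    * Matrix.det (Matrix.of fun i j : Fin k => (hh τ (firstHalf x i) (secondHalf x j))⁻¹)

/-- The expression defining the elliptic Tsuchiya determinant is well defined:
the Vandermonde-type denominators and the entries `𝕙(x_i,x_{j+k})` are nonzero. -/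
def tsuDefined (τ : ℂ) (k : ℕ) (x : Fin (2 * k) → ℂ) : Prop :=
  (∀ i j : Fin k, i ≠ j →
    th1 (firstHalf x j - firstHalf x i) τ ≠ 0 ∧ th1 (firstHalf x j + firstHalf x i) τ ≠ 0) ∧
  (∀ i j : Fin k, i ≠ j →
    th1 (secondHalf x j - secondHalf x i) τ ≠ 0 ∧ th1 (secondHalf x j + secondHalf x i) τ ≠ 0) ∧
  (∀ i j : Fin k, hh τ (firstHalf x i) (secondHalf x j) ≠ 0)

/-- `h(w,w') = 1 − (3+ζ²)ww' + (1−ζ²)ww'(w+w')`. -/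
def hpol (ζ w w' : ℂ) : ℂ := 1 - (3 + ζ ^ 2) * w * w' + (1 - ζ ^ 2) * w * w' * (w + w')

/-- Vandermonde product `Δ(w₁,…,w_k) = ∏_{i<j}(w_j − w_i)`. -/
def vdm {k : ℕ} (y : Fin k → ℂ) : ℂ :=
  ∏ i : Fin k, ∏ j : Fin k, if i < j then y j - y i else 1

/-- The determinant-ratio expression defining the polynomial `H_{2k}`. -/
def Hratio (ζ : ℂ) (k : ℕ) (w : Fin (2 * k) → ℂ) : ℂ :=
  (∏ i : Fin k, ∏ j : Fin k, hpol ζ (firstHalf w i) (secondHalf w j))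
    / (vdm (firstHalf w) * vdm (secondHalf w))
    * Matrix.det (Matrix.of fun i j : Fin k => (hpol ζ (firstHalf w i) (secondHalf w j))⁻¹)

/-- The expression `Hratio` is well defined at `w`. -/
def HratioDefined (ζ : ℂ) (k : ℕ) (w : Fin (2 * k) → ℂ) : Prop :=
  (∀ i j : Fin k, i ≠ j → firstHalf w i ≠ firstHalf w j) ∧
  (∀ i j : Fin k, i ≠ j → secondHalf w i ≠ secondHalf w j) ∧
  (∀ i j : Fin k, hpol ζ (firstHalf w i) (secondHalf w j) ≠ 0)

/-- `H` is the family of Rosengren–Zinn-Justin polynomials `H_{2k}` for parameter `ζ`: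
for each `k`, `H k` is a polynomial function of the `2k` variables agreeing with the
determinant-ratio formula wherever the latter is defined, and `H 0 = 1`. -/
def IsHFamily (ζ : ℂ) (H : (k : ℕ) → (Fin (2 * k) → ℂ) → ℂ) : Prop :=
  (∀ w, H 0 w = 1) ∧
  (∀ k : ℕ, ∃ P : MvPolynomial (Fin (2 * k)) ℂ, ∀ w, H k w = MvPolynomial.eval w P) ∧
  (∀ (k : ℕ) (w : Fin (2 * k) → ℂ), HratioDefined ζ k w → H k w = Hratio ζ k w)

/-- Vertex weight `a(u)`. -/
def av (τ u : ℂ) : ℂ := th4 (2*ηc) (2*τ) * th1 (u + 2*ηc) (2*τ) * th4 u (2*τ)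
/-- Vertex weight `b(u)`. -/
def bv (τ u : ℂ) : ℂ := th4 (2*ηc) (2*τ) * th4 (u + 2*ηc) (2*τ) * th1 u (2*τ)
/-- Vertex weight `c(u)`. -/
def cv (τ u : ℂ) : ℂ := th1 (2*ηc) (2*τ) * th4 (u + 2*ηc) (2*τ) * th4 u (2*τ)
/-- Vertex weight `d(u)`. -/
def dv (τ u : ℂ) : ℂ := th1 (2*ηc) (2*τ) * th1 (u + 2*ηc) (2*τ) * th1 u (2*τ)
/-- `r(u) = a(u) + b(u)`. -/
def rv (τ u : ℂ) : ℂ := av τ u + bv τ u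

/-- Entries of the `R`-matrix of the eight-vertex model, in the basis `{↑↑,↑↓,↓↑,↓↓}`
identified with `Fin 2 × Fin 2` (`↑ = 0`, `↓ = 1`). -/
def Rent (τ u : ℂ) (p q : Fin 2 × Fin 2) : ℂ :=
  if p = q then (if p.1 = p.2 then av τ u else bv τ u)
  else if q = (p.2, p.1) then cv τ u
  else if p.1 = p.2 ∧ q.1 = q.2 then dv τ u
  else 0

/-- Entries of `Ř(u) = 𝒫 R(u)`. -/
def Rcheckent (τ u : ℂ) (p q : Fin 2 × Fin 2) : ℂ := Rent τ u (p.2, p.1) q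

/-- The boundary vector `χ(x) ∈ ℂ²⊗ℂ²`. -/
def chiV (τ lam x : ℂ) : Fin 2 × Fin 2 → ℂ := fun p =>
  if p = ((0 : Fin 2), (1 : Fin 2)) then th1 (x + lam) (2*τ) * th4 (x - lam - 2*ηc) (2*τ)
  else if p = ((1 : Fin 2), (0 : Fin 2)) then th1 (x - lam - 2*ηc) (2*τ) * th4 (x + lam) (2*τ)
  else 0

/-- The boundary vector `χ̄(x) ∈ ℂ²⊗ℂ²`. -/
def chibarV (τ lam x : ℂ) : Fin 2 × Fin 2 → ℂ := fun p =>
  if p = ((0 : Fin 2), (0 : Fin 2)) then th1 (x + lam) (2*τ) * th1 (x - lam - 2*ηc) (2*τ)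
  else if p = ((1 : Fin 2), (1 : Fin 2)) then th4 (x - lam - 2*ηc) (2*τ) * th4 (x + lam) (2*τ)
  else 0

/-- A family `Ψ_n(u₁,…,u_{2n+1}) ∈ (ℂ²)^{⊗(2n+1)}`, represented by its components
with respect to spin configurations `α : Fin (2n+1) → Fin 2` (`↑ = 0`, `↓ = 1`). -/
abbrev PsiFam := (n : ℕ) → (Fin (2 * n + 1) → ℂ) → (Fin (2 * n + 1) → Fin 2) → ℂ

/-- The action of `Ř(u)` on tensor factors `i`, `j` of `(ℂ²)^{⊗L}`. -/
def applyRc (τ u : ℂ) {L : ℕ} (i j : Fin L) (ψ : (Fin L → Fin 2) → ℂ) :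
    (Fin L → Fin 2) → ℂ := fun α =>
  ∑ s : Fin 2, ∑ t : Fin 2,
    Rcheckent τ u (α i, α j) (s, t) * ψ (Function.update (Function.update α i s) j t)

/-- Spin flip. -/
def flipS : Fin 2 → Fin 2 := fun s => if s = 0 then 1 else 0

/-- Components of the singlet `s = ↑↓ − ↓↑`. -/
def singletC : Fin 2 → Fin 2 → ℂ := fun s t =>
  if s = 0 ∧ t = 1 then 1 else if s = 1 ∧ t = 0 then -1 else 0

/-- Delete the entries at positions `i`, `i+1` from a tuple. -/
def delTwo {α : Type*} {n : ℕ} (i : ℕ) (u : Fin (2 * (n + 1) + 1) → α) : Fin (2 * n + 1) → α :=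
  fun j => if _h : (j : ℕ) < i then u ⟨j, by have := j.2; omega⟩
           else u ⟨(j : ℕ) + 2, by have := j.2; omega⟩

/-- The components of `Ψ_n` are entire functions of each `u_i`. -/
def PsiEntire (Ψ : PsiFam) : Prop :=
  ∀ (n : ℕ) (u : Fin (2*n+1) → ℂ) (i : Fin (2*n+1)) (α : Fin (2*n+1) → Fin 2),
    Differentiable ℂ fun z => Ψ n (Function.update u i z) α

/-- (P1): the exchange relations. -/
def PsiP1 (τ : ℂ) (Ψ : PsiFam) : Prop :=
  ∀ (n : ℕ) (u : Fin (2*n+1) → ℂ) (i j : Fin (2*n+1)), (j : ℕ) = (i : ℕ) + 1 →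
    applyRc τ (u j - u i) i j (Ψ n u)
      = fun α => rv τ (u j - u i) * Ψ n (fun l => u (Equiv.swap i j l)) α

/-- (P2): local spin flips. -/
def PsiP2 (τ : ℂ) (Ψ : PsiFam) : Prop :=
  ∀ (n : ℕ) (u : Fin (2*n+1) → ℂ) (i : Fin (2*n+1)) (α : Fin (2*n+1) → Fin 2),
    Ψ n u (Function.update α i (flipS (α i)))
      = (-(pnome τ)) ^ n * Complex.exp (-Complex.I * ∑ j, (u j - u i))
        * Ψ n (Function.update u i (u i + Real.pi * τ)) α

/-- (P3): quasi-periodicity of `Ψ_n` in each `u_i`. -/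
def PsiP3 (τ : ℂ) (Ψ : PsiFam) : Prop :=
  ∀ (n : ℕ) (u : Fin (2*n+1) → ℂ) (i : Fin (2*n+1)),
    (Ψ n (Function.update u i (u i + Real.pi))
      = fun α => (∏ j ∈ Finset.univ.erase i, (if α j = 0 then (1:ℂ) else -1)) * Ψ n u α) ∧
    (Ψ n (Function.update u i (u i + 2 * Real.pi * τ))
      = fun α => (pnome τ ^ (4*n))⁻¹ *
          Complex.exp (-2 * Complex.I * ∑ j, (u i - u j)) * Ψ n u α)

/-- (P4): the wheel condition. -/
def PsiP4 (Ψ : PsiFam) : Prop :=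
  ∀ (n : ℕ) (u : Fin (2*n+1) → ℂ),
    (∃ i j k : Fin (2*n+1), i < j ∧ j < k ∧ u j = u i + 2*ηc ∧ u k = u i + 4*ηc) →
    Ψ n u = 0

/-- (P5): the reduction relations. -/
def PsiP5 (τ : ℂ) (Ψ : PsiFam) : Prop :=
  ∀ (n : ℕ) (u : Fin (2*(n+1)+1) → ℂ) (i : ℕ) (hi : i + 1 < 2*(n+1)+1),
    u ⟨i+1, hi⟩ = u ⟨i, by omega⟩ + 2*ηc →
    Ψ (n+1) u = fun α =>
      (∏ j ∈ (Finset.univ.erase (⟨i, by omega⟩ : Fin (2*(n+1)+1))).erase ⟨i+1, hi⟩,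
          th1 (u ⟨i, by omega⟩ - u j - 2*ηc) τ)
        * singletC (α ⟨i, by omega⟩) (α ⟨i+1, hi⟩)
        * Ψ n (delTwo i u) (delTwo i α)

/-- (P6): `Ψ₀ = ↑ + ↓`. -/
def PsiP6 (Ψ : PsiFam) : Prop := ∀ u α, Ψ 0 u α = 1

/-- The inhomogeneity parameters `(x₁,−x₁,…,x_n,−x_n,0)`. -/
def interleave {n : ℕ} (x : Fin n → ℂ) : Fin (2*n+1) → ℂ := fun j =>
  if h : (j : ℕ) < 2*n then
    (if (j : ℕ) % 2 = 0 then x ⟨(j:ℕ)/2, by omega⟩ else -x ⟨(j:ℕ)/2, by omega⟩)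
  else 0

/-- Components of `χ(x)`. -/
def chiC (τ lam x : ℂ) (s t : Fin 2) : ℂ :=
  if s = 0 ∧ t = 1 then th1 (x + lam) (2*τ) * th4 (x - lam - 2*ηc) (2*τ)
  else if s = 1 ∧ t = 0 then th1 (x - lam - 2*ηc) (2*τ) * th4 (x + lam) (2*τ)
  else 0

/-- Components of `χ̄(x)`. -/
def chibarC (τ lam x : ℂ) (s t : Fin 2) : ℂ :=
  if s = 0 ∧ t = 0 then th1 (x + lam) (2*τ) * th1 (x - lam - 2*ηc) (2*τ)
  else if s = 1 ∧ t = 1 then th4 (x - lam - 2*ηc) (2*τ) * th4 (x + lam) (2*τ)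
  else 0

/-- The scalar product `Z_n(x₁,…,x_n) = ⟨ξ_n(x₁,…,x_n), Ψ_n(x₁,−x₁,…,x_n,−x_n,0)⟩`. -/
def Zfun (τ lam : ℂ) (Ψ : PsiFam) (n : ℕ) (x : Fin n → ℂ) : ℂ :=
  ∑ α : Fin (2*n+1) → Fin 2,
    (∏ m : Fin n, chiC τ lam (x m)
        (α ⟨2*(m:ℕ), by have := m.2; omega⟩) (α ⟨2*(m:ℕ)+1, by have := m.2; omega⟩))
      * (if α ⟨2*n, by omega⟩ = 0 then (1:ℂ) else 0)
      * Ψ n (interleave x) α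

/-- The scalar product `Z̄_n^±(x₁,…,x_n)`, with `ε = ±1`. -/
def Zbarfun (τ lam ε : ℂ) (Ψ : PsiFam) (n : ℕ) (x : Fin n → ℂ) : ℂ :=
  ∑ α : Fin (2*n+1) → Fin 2,
    (∏ m : Fin n, chibarC τ lam (x m)
        (α ⟨2*(m:ℕ), by have := m.2; omega⟩) (α ⟨2*(m:ℕ)+1, by have := m.2; omega⟩))
      * (if α ⟨2*n, by omega⟩ = 0 then (1:ℂ) else ε)
      * Ψ n (interleave x) α

/-- The normalisation constant `𝒩_n`. -/
def Ncoef (τ : ℂ) (n : ℕ) : ℂ :=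
  (-1 : ℂ) ^ ((n+1)/2) * (th1 ηc τ ^ (n^2))⁻¹ * (th4 0 (2*τ) / th4 ηc (2*τ)) ^ (n*(n+1)/2)

/-- The vector `ψ_n = 𝒩_n Ψ_n(0,…,0)`. -/
def psiH (τ : ℂ) (Ψ : PsiFam) (n : ℕ) (α : Fin (2*n+1) → Fin 2) : ℂ :=
  Ncoef τ n * Ψ n (fun _ => 0) α

/-- The scalar product `S_n(μ) = ((⟨↑↓| + μ⟨↓↑|)^{⊗n} ⊗ ⟨↑|) ψ_n`. -/
def Sfun (τ : ℂ) (Ψ : PsiFam) (n : ℕ) (μ : ℂ) : ℂ :=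
  ∑ α : Fin (2*n+1) → Fin 2,
    (∏ m : Fin n,
      (if α ⟨2*(m:ℕ), by have := m.2; omega⟩ = 0 ∧ α ⟨2*(m:ℕ)+1, by have := m.2; omega⟩ = 1
        then (1:ℂ)
       else if α ⟨2*(m:ℕ), by have := m.2; omega⟩ = 1 ∧ α ⟨2*(m:ℕ)+1, by have := m.2; omega⟩ = 0
        then μ
       else 0))
      * (if α ⟨2*n, by omega⟩ = 0 then (1:ℂ) else 0) * psiH τ Ψ n α

/-- The scalar product `S̄_n^±(ν) = ((⟨↑↑| + ν⟨↓↓|)^{⊗n} ⊗ (⟨↑| ± ⟨↓|)) ψ_n`, with `ε = ±1`. -/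
def Sbarfun (τ ε : ℂ) (Ψ : PsiFam) (n : ℕ) (ν : ℂ) : ℂ :=
  ∑ α : Fin (2*n+1) → Fin 2,
    (∏ m : Fin n,
      (if α ⟨2*(m:ℕ), by have := m.2; omega⟩ = 0 ∧ α ⟨2*(m:ℕ)+1, by have := m.2; omega⟩ = 0
        then (1:ℂ)
       else if α ⟨2*(m:ℕ), by have := m.2; omega⟩ = 1 ∧ α ⟨2*(m:ℕ)+1, by have := m.2; omega⟩ = 1
        then ν
       else 0))
      * (if α ⟨2*n, by omega⟩ = 0 then (1:ℂ) else ε) * psiH τ Ψ n α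

/-- The alternating spin configuration `↑↓↑↓⋯↑`. -/
def altConf {L : ℕ} : Fin L → Fin 2 := fun j => if (j : ℕ) % 2 = 0 then 0 else 1

/-- The fully polarised spin configuration `↓⋯↓`. -/
def downConf {L : ℕ} : Fin L → Fin 2 := fun _ => 1

/-- The spin configuration `↑⋯↑↓` with a single `↓` at the last site. -/
def lastDownConf {n : ℕ} : Fin (2*n+1) → Fin 2 := fun j => if (j : ℕ) = 2*n then 1 else 0

/-- `J₂ = −1/2`. -/
def J2c : ℂ := -(1/2)
/-- `J₃ = 1/(1+ζ)`. -/
def J3c (ζ : ℂ) : ℂ := 1/(1+ζ)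
/-- `J₄ = 1/(1−ζ)`. -/
def J4c (ζ : ℂ) : ℂ := 1/(1-ζ)
/-- `μ̄ = (μ−1)²/((ζ²−1)μ)`. -/
def mubar (ζ μ : ℂ) : ℂ := (μ - 1)^2 / ((ζ^2 - 1)*μ)
/-- `ν̄ = (ν−ζ)(νζ−1)/((ζ²−1)ν)`. -/
def nubar (ζ ν : ℂ) : ℂ := (ν - ζ)*(ν*ζ - 1) / ((ζ^2 - 1)*ν)

/-- The elliptic function `w(x)`. -/
def wfun (τ x : ℂ) : ℂ :=
  th4 ηc (2*τ) / th4 0 (2*τ) * th1 x τ ^ 2 / (th1 (x - ηc) τ * th1 (x + ηc) τ)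

/-- `β₂ = η + π/2`. -/
def β2c : ℂ := ηc + (Real.pi : ℂ)/2
/-- `β₃ = η + π/2 + πτ/2`. -/
def β3c (τ : ℂ) : ℂ := ηc + (Real.pi : ℂ)/2 + (Real.pi : ℂ)*τ/2
/-- `β₄ = η + πτ/2`. -/
def β4c (τ : ℂ) : ℂ := ηc + (Real.pi : ℂ)*τ/2

/-- `f` is an (even) theta function of degree `m`, nome `p = e^{iπτ}` and norm `0`
with respect to each of its variables. -/
def ThetaLike (τ : ℂ) (m : ℕ) {n : ℕ} (X : (Fin n → ℂ) → ℂ) : Prop :=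
  ∀ (x : Fin n → ℂ) (i : Fin n),
    Differentiable ℂ (fun z => X (Function.update x i z)) ∧
    (∀ z, X (Function.update x i (z + Real.pi)) = X (Function.update x i z)) ∧
    (∀ z, X (Function.update x i (z + Real.pi * τ))
        = ((-(pnome τ)) ^ m)⁻¹ * Complex.exp (-2 * Complex.I * ((m : ℂ) * z))
            * X (Function.update x i z)) ∧
    (∀ z, X (Function.update x i (-z)) = X (Function.update x i z))

/-! Each zero comes from two neighbouring sites carrying `u = x_i` and `v = -x_i`.

* At `x_i = -η`, since `π = 3η`, the triple `(-η, η, 0)` becomes a wheel once its last entry is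
  shifted by `π`, so `Ψ_n` itself vanishes. At `x_i = η` the wheel appears after exchanging the two
  sites; as `b(-2η) = -c(-2η) ≠ 0`, the exchange relation then says that `Ψ_n` is symmetric under
  swapping the two spins, whereas `χ(η)` is antisymmetric.
* At `x_i = -β₂` one has `a = d = 0` and at `x_i = -β₃, -β₄` one has `b = c = 0`, so the exchange
  relation `r Ψ_n(u, v) = Ř Ψ_n(v, u)` kills the components of `Ψ_n` with parallel, respectively
  antiparallel, spins, which are the only ones that `χ̄`, respectively `χ`, sees.

Dividing by `r` and `c` needs `ϑ₄(0)`, `ϑ₁(2η)`, `ϑ₄(2η) ≠ 0`. All product formulas used for this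
are instances of one quadratic identity between theta functions of moduli `τ` and `2τ`; it
propagates a zero from `τ` to `2τ`, `4τ`, …, where it contradicts the limit `τ → i∞`. -/

section ThetaQuadratic

theorem hasSum_int_prod_of_parity {M : Type*} [AddCommMonoid M] [TopologicalSpace M]
    [ContinuousAdd M] {f : ℤ × ℤ → M} {a b : M}
    (heven : HasSum (fun p : ℤ × ℤ => f (p.1 + p.2, p.1 - p.2)) a)
    (hodd : HasSum (fun p : ℤ × ℤ => f (p.1 + p.2 + 1, p.1 - p.2)) b) :
    HasSum f (a + b) := by
  have heven_inj : Function.Injective fun p : ℤ × ℤ => (p.1 + p.2, p.1 - p.2) := by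
    rintro ⟨k, l⟩ ⟨k', l'⟩ h
    simp only [Prod.mk.injEq] at h ⊢
    omega
  have hodd_inj : Function.Injective fun p : ℤ × ℤ => (p.1 + p.2 + 1, p.1 - p.2) := by
    rintro ⟨k, l⟩ ⟨k', l'⟩ h
    simp only [Prod.mk.injEq] at h ⊢
    omega
  refine (heven_inj.hasSum_range_iff.mpr heven).add_isCompl ⟨?_, ?_⟩
    (hodd_inj.hasSum_range_iff.mpr hodd)
  · rw [Set.disjoint_left]
    rintro _ ⟨⟨k, l⟩, rfl⟩ ⟨⟨k', l'⟩, h⟩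
    simp only [Prod.mk.injEq] at h
    omega
  · refine codisjoint_iff.mpr (Set.eq_univ_of_forall ?_)
    rintro ⟨m, n⟩
    rcases Int.even_or_odd' (m + n) with ⟨k, hk | hk⟩
    · exact Or.inl ⟨(k, m - k), by simp only [Prod.mk.injEq]; omega⟩
    · exact Or.inr ⟨(k, m - k - 1), by simp only [Prod.mk.injEq]; omega⟩

theorem hasSum_jacobiTheta₂_term_mul (x y : ℂ) {τ : ℂ} (hτ : 0 < τ.im) :
    HasSum (fun p : ℤ × ℤ => jacobiTheta₂_term p.1 x τ * jacobiTheta₂_term p.2 y τ)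
      (jacobiTheta₂ x τ * jacobiTheta₂ y τ) := by
  have hx := hasSum_jacobiTheta₂_term x hτ
  have hy := hasSum_jacobiTheta₂_term y hτ
  have hprod := summable_mul_of_summable_norm hx.summable.norm hy.summable.norm
  exact (hx.mul hy hprod :)

theorem jacobiTheta₂_mul_jacobiTheta₂ (x y τ : ℂ) :
    jacobiTheta₂ x τ * jacobiTheta₂ y τ =
      jacobiTheta₂ (x + y) (2 * τ) * jacobiTheta₂ (x - y) (2 * τ) +
        cexp (Real.pi * I * (τ + 2 * x)) *
          (jacobiTheta₂ (x + y + τ) (2 * τ) * jacobiTheta₂ (x - y + τ) (2 * τ)) := by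
  rcases le_or_gt τ.im 0 with hτ | hτ
  · have him : (2 * τ).im = 2 * τ.im := by simp
    have hτ2 : (2 * τ).im ≤ 0 := by linarith
    simp only [jacobiTheta₂_undef _ hτ, jacobiTheta₂_undef _ hτ2, mul_zero, add_zero]
  have hτ2 : 0 < (2 * τ).im := by simpa using hτ
  refine (hasSum_jacobiTheta₂_term_mul x y hτ).unique (hasSum_int_prod_of_parity ?_ ?_)
  · refine (hasSum_jacobiTheta₂_term_mul (x + y) (x - y) hτ2).congr_fun fun p => ?_
    simp only [jacobiTheta₂_term, ← Complex.exp_add]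
    congr 1
    push_cast
    ring
  · refine ((hasSum_jacobiTheta₂_term_mul (x + y + τ) (x - y + τ) hτ2).mul_left _).congr_fun
      fun p => ?_
    simp only [jacobiTheta₂_term, ← Complex.exp_add]
    congr 1
    push_cast
    ring

theorem jacobiTheta₂_half_add_half_period (τ : ℂ) : jacobiTheta₂ (1 / 2 + τ / 2) τ = 0 := by
  have hquasi := jacobiTheta₂_add_left' (1 / 2 - τ / 2) τ
  have hneg : jacobiTheta₂ (1 / 2 - τ / 2) τ = jacobiTheta₂ (1 / 2 + τ / 2) τ := by
    rw [← jacobiTheta₂_neg_left, ← jacobiTheta₂_add_left]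
    congr 1
    ring
  rw [hneg, show 1 / 2 - τ / 2 + τ = 1 / 2 + τ / 2 by ring,
    show -Real.pi * I * (τ + 2 * (1 / 2 - τ / 2)) = -(Real.pi * I) by ring, Complex.exp_neg,
    Complex.exp_pi_mul_I] at hquasi
  refine self_eq_neg.mp (hquasi.trans ?_)
  norm_num

theorem jacobiTheta₂_mul_jacobiTheta₂_add_half (z τ : ℂ) :
    jacobiTheta₂ z τ * jacobiTheta₂ (z + 1 / 2) τ =
      jacobiTheta₂ (2 * z + 1 / 2) (2 * τ) * jacobiTheta₂ (1 / 2) (2 * τ) := by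
  have hzero : jacobiTheta₂ (z - (z + 1 / 2) + τ) (2 * τ) = 0 := by
    rw [← jacobiTheta₂_half_add_half_period (2 * τ), ← jacobiTheta₂_add_left]
    congr 1
    ring
  have heven : jacobiTheta₂ (z - (z + 1 / 2)) (2 * τ) = jacobiTheta₂ (1 / 2) (2 * τ) := by
    rw [← jacobiTheta₂_neg_left]
    congr 1
    ring
  rw [jacobiTheta₂_mul_jacobiTheta₂, hzero, heven, mul_zero, mul_zero, add_zero]
  congr 2
  ring

theorem jacobiTheta₂_add_half_period_mul (z τ : ℂ) :
    jacobiTheta₂ (z + τ / 2) τ * jacobiTheta₂ (τ / 2) τ =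
      2 * (jacobiTheta₂ z (2 * τ) * jacobiTheta₂ (z + τ) (2 * τ)) := by
  have hquasi := jacobiTheta₂_add_left' z (2 * τ)
  have hexp : cexp (Real.pi * I * (τ + 2 * (z + τ / 2))) * cexp (-Real.pi * I * (2 * τ + 2 * z)) =
      1 := by
    rw [← Complex.exp_add, ← Complex.exp_zero]
    congr 1
    ring
  rw [← jacobiTheta₂_neg_left (τ / 2), jacobiTheta₂_mul_jacobiTheta₂,
    show z + τ / 2 + -(τ / 2) = z by ring, show z + τ / 2 - -(τ / 2) = z + τ by ring,
    show z + τ + τ = z + 2 * τ by ring, hquasi]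
  linear_combination jacobiTheta₂ (z + τ) (2 * τ) * jacobiTheta₂ z (2 * τ) * hexp

theorem jacobiTheta₂_add_half_period_mul_jacobiTheta₂_zero (z τ : ℂ) :
    jacobiTheta₂ (z + τ / 2) τ * jacobiTheta₂ 0 τ =
      jacobiTheta₂ (z + τ / 2) (2 * τ) ^ 2 +
        cexp (-(2 * Real.pi * I * z)) * jacobiTheta₂ (z - τ / 2) (2 * τ) ^ 2 := by
  have hquasi := jacobiTheta₂_add_left' (z - τ / 2) (2 * τ)
  have hexp : cexp (Real.pi * I * (τ + 2 * (z + τ / 2))) *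
      cexp (-Real.pi * I * (2 * τ + 2 * (z - τ / 2))) ^ 2 = cexp (-(2 * Real.pi * I * z)) := by
    rw [← Complex.exp_nat_mul, ← Complex.exp_add]
    congr 1
    push_cast
    ring
  rw [jacobiTheta₂_mul_jacobiTheta₂, add_zero, sub_zero,
    show z + τ / 2 + τ = z - τ / 2 + 2 * τ by ring, hquasi]
  linear_combination jacobiTheta₂ (z - τ / 2) (2 * τ) ^ 2 * hexp

end ThetaQuadratic

section ThetaNonvanishing

open Filter Topology

theorem tendsto_jacobiTheta₂_one {ι : Type*} {l : Filter ι} [l.IsCountablyGenerated]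
    {z τ : ι → ℂ} {δ : ℝ} (hδ : δ < 1 / 2) (hz : ∀ i, |(z i).im| ≤ δ * (τ i).im)
    (hτ : Tendsto (fun i => (τ i).im) l atTop) :
    Tendsto (fun i => jacobiTheta₂ (z i) (τ i)) l (𝓝 1) := by
  have habs_le_sq (n : ℤ) : |(n : ℝ)| ≤ n ^ 2 := by
    rw [← sq_abs]
    exact_mod_cast Int.le_self_sq |n|
  have hexponent {n : ℤ} (hn : n ≠ 0) : 0 < (n : ℝ) ^ 2 - 2 * δ * |(n : ℝ)| := by
    have : 0 < |(n : ℝ)| := by positivity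
    nlinarith [habs_le_sq n]
  have hnorm {i : ι} (hi : 1 ≤ (τ i).im) (n : ℤ) : ‖jacobiTheta₂_term n (z i) (τ i)‖ ≤
      Real.exp (-Real.pi * ((n : ℝ) ^ 2 - 2 * δ * |(n : ℝ)|) * (τ i).im) := by
    refine (norm_jacobiTheta₂_term_le (by linarith) (hz i) le_rfl n).trans_eq ?_
    push_cast
    ring_nf
  have hlim : (1 : ℂ) = ∑' n : ℤ, if n = 0 then 1 else 0 := (tsum_ite_eq 0 fun _ => (1 : ℂ)).symm
  rw [hlim]
  refine tendsto_tsum_of_dominated_convergence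
    (by simpa using summable_pow_mul_jacobiTheta₂_term_bound δ one_pos 0) (fun n => ?_) ?_
  · rcases eq_or_ne n 0 with rfl | hn
    · simpa [jacobiTheta₂_term] using tendsto_const_nhds
    · rw [if_neg hn]
      refine squeeze_zero_norm' ((hτ.eventually_ge_atTop 1).mono fun i hi => hnorm hi n) ?_
      exact Real.tendsto_exp_atBot.comp (hτ.const_mul_atTop_of_neg
        (mul_neg_of_neg_of_pos (neg_neg_of_pos Real.pi_pos) (hexponent hn)))
  · filter_upwards [hτ.eventually_ge_atTop 1] with i hi n
    refine (hnorm hi n).trans (Real.exp_le_exp.mpr ?_)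
    rcases eq_or_ne n 0 with rfl | hn
    · simp
    · have := mul_pos Real.pi_pos (hexponent hn)
      nlinarith

theorem im_two_pow_mul (k : ℕ) (τ : ℂ) : (2 ^ k * τ).im = 2 ^ k * τ.im := by
  exact_mod_cast im_ofReal_mul (2 ^ k) τ

theorem tendsto_im_two_pow_mul_atTop {τ : ℂ} (hτ : 0 < τ.im) :
    Tendsto (fun k : ℕ => (2 ^ k * τ).im) atTop atTop := by
  simp only [im_two_pow_mul]
  exact (tendsto_pow_atTop_atTop_of_one_lt one_lt_two).atTop_mul_const hτ

theorem jacobiTheta₂_ofReal_ne_zero (s : ℝ) {τ : ℂ} (hτ : 0 < τ.im) : jacobiTheta₂ s τ ≠ 0 := by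
  intro hs
  have hdouble (τ' : ℂ) : (∃ t : ℝ, jacobiTheta₂ t τ' = 0) →
      ∃ t : ℝ, jacobiTheta₂ t (2 * τ') = 0 := by
    rintro ⟨t, ht⟩
    have h := jacobiTheta₂_mul_jacobiTheta₂_add_half t τ'
    rw [ht, zero_mul, zero_eq_mul] at h
    rcases h with h | h
    · exact ⟨2 * t + 1 / 2, by push_cast; exact h⟩
    · exact ⟨1 / 2, by push_cast; exact h⟩
  have hzeros (k : ℕ) : ∃ t : ℝ, jacobiTheta₂ t (2 ^ k * τ) = 0 := by
    induction k with
    | zero => exact ⟨s, by simpa using hs⟩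
    | succ k ih => simpa only [pow_succ', mul_assoc] using hdouble _ ih
  choose t ht using hzeros
  have hlim := tendsto_jacobiTheta₂_one (z := fun k => (t k : ℂ)) (δ := 0) (by norm_num)
    (by simp) (tendsto_im_two_pow_mul_atTop hτ)
  simp only [ht] at hlim
  exact zero_ne_one (tendsto_nhds_unique tendsto_const_nhds hlim)

theorem tendsto_jacobiTheta₂_add_half_period_mul_jacobiTheta₂_zero {ι : Type*} {l : Filter ι}
    [l.IsCountablyGenerated] (s : ℝ) {τ : ι → ℂ} (hτ₀ : ∀ i, 0 ≤ (τ i).im)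
    (hτ : Tendsto (fun i => (τ i).im) l atTop) :
    Tendsto (fun i => jacobiTheta₂ (s + τ i / 2) (τ i) * jacobiTheta₂ 0 (τ i)) l
      (𝓝 (1 + cexp (-(2 * Real.pi * I * s)))) := by
  have hτ2 : Tendsto (fun i => (2 * τ i).im) l atTop := by
    simpa using hτ.const_mul_atTop two_pos
  have hbound (i : ι) : |(τ i).im / 2| ≤ 1 / 4 * (2 * τ i).im := by
    have him : (2 * τ i).im = 2 * (τ i).im := by simp
    rw [abs_of_nonneg (div_nonneg (hτ₀ i) zero_le_two), him]
    linarith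
  have hplus : Tendsto (fun i => jacobiTheta₂ (s + τ i / 2) (2 * τ i)) l (𝓝 1) :=
    tendsto_jacobiTheta₂_one (δ := 1 / 4) (by norm_num)
      (fun i => by simpa using hbound i) hτ2
  have hminus : Tendsto (fun i => jacobiTheta₂ (s - τ i / 2) (2 * τ i)) l (𝓝 1) :=
    tendsto_jacobiTheta₂_one (δ := 1 / 4) (by norm_num)
      (fun i => by simpa using hbound i) hτ2
  simpa only [jacobiTheta₂_add_half_period_mul_jacobiTheta₂_zero, one_pow, mul_one] using
    (hplus.pow 2).add ((hminus.pow 2).const_mul (cexp (-(2 * Real.pi * I * s))))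

theorem jacobiTheta₂_ofReal_add_half_period_ne_zero {s : ℝ}
    (hs : cexp (2 * Real.pi * I * s) ≠ -1) {τ : ℂ} (hτ : 0 < τ.im) :
    jacobiTheta₂ (s + τ / 2) τ ≠ 0 := by
  intro h0
  have hdouble {τ' : ℂ} (hτ' : 0 < τ'.im) (h : jacobiTheta₂ (s + τ' / 2) τ' = 0) :
      jacobiTheta₂ (s + 2 * τ' / 2) (2 * τ') = 0 := by
    have hprod := jacobiTheta₂_add_half_period_mul s τ'
    rw [h, zero_mul, zero_eq_mul, or_iff_right two_ne_zero, mul_eq_zero] at hprod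
    rw [mul_div_cancel_left₀ _ two_ne_zero]
    exact hprod.resolve_left (jacobiTheta₂_ofReal_ne_zero s (by simpa using hτ'))
  have him (k : ℕ) : 0 < (2 ^ k * τ).im := by
    rw [im_two_pow_mul]
    positivity
  have hzeros (k : ℕ) : jacobiTheta₂ (s + 2 ^ k * τ / 2) (2 ^ k * τ) = 0 := by
    induction k with
    | zero => simpa using h0
    | succ k ih => simpa only [pow_succ', mul_assoc] using hdouble (him k) ih
  have hlim := tendsto_jacobiTheta₂_add_half_period_mul_jacobiTheta₂_zero s
    (fun k => (him k).le) (tendsto_im_two_pow_mul_atTop hτ)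
  simp only [hzeros, zero_mul] at hlim
  have hsum := tendsto_nhds_unique hlim tendsto_const_nhds
  rw [add_comm, add_eq_zero_iff_eq_neg, Complex.exp_neg, inv_eq_iff_eq_inv, inv_neg,
    inv_one] at hsum
  exact hs hsum

end ThetaNonvanishing

section JacobiFunctions

theorem th4_eq_jacobiTheta₂ (z τ : ℂ) : th4 z τ = jacobiTheta₂ (z / Real.pi + 1 / 2) τ := by
  have hπ : (Real.pi : ℂ) ≠ 0 := ofReal_ne_zero.mpr Real.pi_ne_zero
  refine tsum_congr fun n => ?_
  rw [jacobiTheta₂_term, ← Complex.exp_pi_mul_I, ← Complex.exp_int_mul, ← Complex.exp_add]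
  congr 1
  field_simp
  ring

theorem th4_neg (z τ : ℂ) : th4 (-z) τ = th4 z τ := by
  rw [th4_eq_jacobiTheta₂, th4_eq_jacobiTheta₂, ← jacobiTheta₂_neg_left (z / Real.pi + 1 / 2),
    ← jacobiTheta₂_add_left (-(z / Real.pi + 1 / 2))]
  congr 1
  ring

theorem th4_sub_pi (z τ : ℂ) : th4 (z - Real.pi) τ = th4 z τ := by
  have hπ : (Real.pi : ℂ) ≠ 0 := ofReal_ne_zero.mpr Real.pi_ne_zero
  rw [th4_eq_jacobiTheta₂, th4_eq_jacobiTheta₂, ← jacobiTheta₂_add_left, sub_div, div_self hπ]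
  congr 1
  ring

theorem th1_eq_th4_add_half_period (z τ : ℂ) :
    th1 z τ = -I * cexp (Real.pi * I * τ / 4 + I * z) * th4 (z + Real.pi * τ / 2) τ := by
  rw [th1, mul_assoc (-I), th4, ← tsum_mul_left (a := cexp (Real.pi * I * τ / 4 + I * z))]
  congr 1
  refine tsum_congr fun n => ?_
  rw [mul_left_comm, ← Complex.exp_add]
  congr 2
  ring

theorem th1_neg (z τ : ℂ) : th1 (-z) τ = -th1 z τ := by
  rw [th1, th1, ← mul_neg, ← tsum_neg,
    ← ((Equiv.addRight (1 : ℤ)).trans (Equiv.neg ℤ)).tsum_eq]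
  congr 1
  refine tsum_congr fun n => ?_
  have hsign : (-1 : ℂ) ^ (-(n + 1)) = -(-1) ^ n := by
    rw [zpow_neg, zpow_add₀ (by norm_num), mul_inv, ← inv_zpow]
    norm_num
  simp only [Equiv.trans_apply, Equiv.coe_addRight, Equiv.neg_apply, hsign, neg_mul]
  congr 3
  push_cast
  ring

theorem th1_zero (τ : ℂ) : th1 0 τ = 0 :=
  self_eq_neg.mp (by simpa only [neg_zero] using th1_neg 0 τ)

theorem th1_sub_pi (z τ : ℂ) : th1 (z - Real.pi) τ = -th1 z τ := by
  rw [th1_eq_th4_add_half_period, th1_eq_th4_add_half_period z, sub_add_eq_add_sub, th4_sub_pi,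
    mul_sub, ← add_sub_assoc, mul_comm I (Real.pi : ℂ), Complex.exp_sub, Complex.exp_pi_mul_I]
  ring

theorem th4_sub_half_period_eq_zero_iff {z τ : ℂ} :
    th4 (z - Real.pi * τ / 2) τ = 0 ↔ th1 z τ = 0 := by
  rw [← th4_neg, neg_sub', sub_neg_eq_add, ← neg_eq_zero (a := th1 z τ), ← th1_neg,
    th1_eq_th4_add_half_period]
  simp [Complex.exp_ne_zero]

theorem th1_sub_half_period_eq_zero_iff {z τ : ℂ} :
    th1 (z - Real.pi * τ / 2) τ = 0 ↔ th4 z τ = 0 := by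
  rw [th1_eq_th4_add_half_period, sub_add_cancel]
  simp [Complex.exp_ne_zero]

theorem th4_pi_mul_ofReal_ne_zero (s : ℝ) {τ : ℂ} (hτ : 0 < τ.im) : th4 (Real.pi * s) τ ≠ 0 := by
  have hπ : (Real.pi : ℂ) ≠ 0 := ofReal_ne_zero.mpr Real.pi_ne_zero
  rw [th4_eq_jacobiTheta₂, mul_div_cancel_left₀ _ hπ]
  simpa using jacobiTheta₂_ofReal_ne_zero (s + 1 / 2) hτ

theorem th1_pi_mul_ofReal_ne_zero {s : ℝ} (hs : cexp (2 * Real.pi * I * s) ≠ 1) {τ : ℂ}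
    (hτ : 0 < τ.im) : th1 (Real.pi * s) τ ≠ 0 := by
  have hπ : (Real.pi : ℂ) ≠ 0 := ofReal_ne_zero.mpr Real.pi_ne_zero
  have hs' : cexp (2 * Real.pi * I * (s + 1 / 2 : ℝ)) ≠ -1 := by
    push_cast
    rw [show 2 * Real.pi * I * (s + 1 / 2) = 2 * Real.pi * I * s + Real.pi * I by ring,
      Complex.exp_add, Complex.exp_pi_mul_I]
    simpa using hs
  have harg : (Real.pi * s + Real.pi * τ / 2) / Real.pi + 1 / 2 = (s + 1 / 2 : ℝ) + τ / 2 := by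
    push_cast
    field_simp
    ring
  rw [th1_eq_th4_add_half_period, th4_eq_jacobiTheta₂, harg]
  exact mul_ne_zero (mul_ne_zero (neg_ne_zero.mpr I_ne_zero) (Complex.exp_ne_zero _))
    (jacobiTheta₂_ofReal_add_half_period_ne_zero hs' hτ)

theorem th4_zero_ne_zero {τ : ℂ} (hτ : 0 < τ.im) : th4 0 τ ≠ 0 := by
  simpa using th4_pi_mul_ofReal_ne_zero 0 hτ

theorem two_mul_ηc : 2 * ηc = Real.pi * (2 / 3 : ℝ) := by
  rw [ηc]
  push_cast
  ring

theorem th4_two_mul_ηc_ne_zero {τ : ℂ} (hτ : 0 < τ.im) : th4 (2 * ηc) τ ≠ 0 :=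
  two_mul_ηc ▸ th4_pi_mul_ofReal_ne_zero (2 / 3) hτ

theorem th1_two_mul_ηc_ne_zero {τ : ℂ} (hτ : 0 < τ.im) : th1 (2 * ηc) τ ≠ 0 := by
  refine two_mul_ηc ▸ th1_pi_mul_ofReal_ne_zero (fun h => ?_) hτ
  obtain ⟨n, hn⟩ := Complex.exp_eq_one_iff.mp h
  rw [mul_comm, mul_left_inj' two_pi_I_ne_zero] at hn
  have h3 : 2 = 3 * n := by
    have : (2 : ℂ) = 3 * n := by rw [← hn]; push_cast; ring
    exact_mod_cast this
  omega

end JacobiFunctions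

section VertexWeights

variable (τ u : ℂ)

theorem av_sub_pi : av τ (u - Real.pi) = -av τ u := by
  rw [av, av, sub_add_eq_add_sub, th1_sub_pi, th4_sub_pi]
  ring

theorem bv_sub_pi : bv τ (u - Real.pi) = -bv τ u := by
  rw [bv, bv, sub_add_eq_add_sub, th1_sub_pi, th4_sub_pi]
  ring

theorem cv_sub_pi : cv τ (u - Real.pi) = cv τ u := by
  rw [cv, cv, sub_add_eq_add_sub, th4_sub_pi, th4_sub_pi]

theorem dv_sub_pi : dv τ (u - Real.pi) = dv τ u := by
  rw [dv, dv, sub_add_eq_add_sub, th1_sub_pi, th1_sub_pi]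
  ring

theorem rv_sub_pi : rv τ (u - Real.pi) = -rv τ u := by
  rw [rv, rv, av_sub_pi, bv_sub_pi]
  ring

theorem av_neg_two_mul_ηc : av τ (-(2 * ηc)) = 0 := by
  rw [av, neg_add_cancel, th1_zero, mul_zero, zero_mul]

theorem dv_neg_two_mul_ηc : dv τ (-(2 * ηc)) = 0 := by
  rw [dv, neg_add_cancel, th1_zero, mul_zero, zero_mul]

theorem bv_neg_two_mul_ηc : bv τ (-(2 * ηc)) = -cv τ (-(2 * ηc)) := by
  rw [bv, cv, neg_add_cancel, th1_neg, th4_neg]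
  ring

theorem neg_two_mul_β2c : -(2 * β2c) = -(2 * ηc) - Real.pi := by
  rw [β2c]
  ring

theorem neg_two_mul_β4c : -(2 * β4c τ) = -(2 * ηc) - Real.pi * (2 * τ) / 2 := by
  rw [β4c]
  ring

theorem neg_two_mul_β3c : -(2 * β3c τ) = -(2 * β4c τ) - Real.pi := by
  rw [β3c, β4c]
  ring

theorem bv_neg_two_mul_β4c : bv τ (-(2 * β4c τ)) = 0 := by
  rw [bv, neg_two_mul_β4c, sub_add_eq_add_sub, neg_add_cancel,
    th4_sub_half_period_eq_zero_iff.mpr (th1_zero _), mul_zero, zero_mul]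

theorem cv_neg_two_mul_β4c : cv τ (-(2 * β4c τ)) = 0 := by
  rw [cv, neg_two_mul_β4c, sub_add_eq_add_sub, neg_add_cancel,
    th4_sub_half_period_eq_zero_iff.mpr (th1_zero _), mul_zero, zero_mul]

variable {τ}

theorem cv_neg_two_mul_ηc_ne_zero (hτ : 0 < τ.im) : cv τ (-(2 * ηc)) ≠ 0 := by
  have hτ2 : 0 < (2 * τ).im := by simpa using hτ
  rw [cv, neg_add_cancel, th4_neg]
  exact mul_ne_zero (mul_ne_zero (th1_two_mul_ηc_ne_zero hτ2) (th4_zero_ne_zero hτ2))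
    (th4_two_mul_ηc_ne_zero hτ2)

theorem rv_neg_two_mul_ηc_ne_zero (hτ : 0 < τ.im) : rv τ (-(2 * ηc)) ≠ 0 := by
  rw [rv, av_neg_two_mul_ηc, zero_add, bv_neg_two_mul_ηc]
  exact neg_ne_zero.mpr (cv_neg_two_mul_ηc_ne_zero hτ)

theorem rv_neg_two_mul_β4c_ne_zero (hτ : 0 < τ.im) : rv τ (-(2 * β4c τ)) ≠ 0 := by
  have hτ2 : 0 < (2 * τ).im := by simpa using hτ
  rw [rv, bv_neg_two_mul_β4c, add_zero, av, neg_two_mul_β4c, sub_add_eq_add_sub, neg_add_cancel]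
  refine mul_ne_zero (mul_ne_zero (th4_two_mul_ηc_ne_zero hτ2) ?_) ?_
  · exact th1_sub_half_period_eq_zero_iff.not.mpr (th4_zero_ne_zero hτ2)
  · rw [Ne, th4_sub_half_period_eq_zero_iff, th1_neg, neg_eq_zero]
    exact th1_two_mul_ηc_ne_zero hτ2

end VertexWeights

section Exchange

theorem applyRc_apply_of_eq (τ v : ℂ) {L : ℕ} {p q : Fin L} (ψ : (Fin L → Fin 2) → ℂ)
    {α : Fin L → Fin 2} (hα : α p = α q) :
    applyRc τ v p q ψ α = av τ v * ψ α +
      dv τ v * ψ (Function.update (Function.update α p (flipS (α p))) q (flipS (α q))) := by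
  have hid : Function.update (Function.update α p (α q)) q (α q) = α := by simp [← hα]
  rcases Fin.exists_fin_two.mp ⟨α q, rfl⟩ with h | h <;> rw [h] at hid <;>
    simp [applyRc, Rcheckent, Rent, flipS, hα, h, hid, Fin.sum_univ_two, add_comm]

theorem applyRc_apply_of_ne (τ v : ℂ) {L : ℕ} {p q : Fin L} (ψ : (Fin L → Fin 2) → ℂ)
    {α : Fin L → Fin 2} (hα : α p ≠ α q) :
    applyRc τ v p q ψ α = cv τ v * ψ α + bv τ v * ψ (α ∘ Equiv.swap p q) := by
  have hpq : p ≠ q := fun h => hα (congrArg α h)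
  have hid : Function.update (Function.update α p (α p)) q (α q) = α := by simp
  have hswap : Function.update (Function.update α p (α q)) q (α p) = α ∘ Equiv.swap p q := by
    rw [Equiv.comp_swap_eq_update, Function.update_comm hpq]
  rcases Fin.exists_fin_two.mp ⟨α p, rfl⟩ with hp | hp
  · have hq : α q = 1 := by omega
    rw [hp, hq] at hid hswap
    simp [applyRc, Rcheckent, Rent, hp, hq, Fin.sum_univ_two, hid, hswap]
  · have hq : α q = 0 := by omega
    rw [hp, hq] at hid hswap
    simp [applyRc, Rcheckent, Rent, hp, hq, Fin.sum_univ_two, hid, hswap, add_comm]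

variable {τ : ℂ} {Ψ : PsiFam} {n : ℕ} {u : Fin (2 * n + 1) → ℂ} {p q : Fin (2 * n + 1)}

theorem PsiP1.applyRc_swap (h1 : PsiP1 τ Ψ) (hpq : (q : ℕ) = p + 1)
    (α : Fin (2 * n + 1) → Fin 2) :
    applyRc τ (u p - u q) p q (Ψ n (u ∘ Equiv.swap p q)) α = rv τ (u p - u q) * Ψ n u α := by
  simpa using congrFun (h1 n (u ∘ Equiv.swap p q) p q hpq) α

theorem PsiP1.eq_zero_of_parallel (h1 : PsiP1 τ Ψ) (hpq : (q : ℕ) = p + 1)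
    (ha : av τ (u p - u q) = 0) (hd : dv τ (u p - u q) = 0) (hr : rv τ (u p - u q) ≠ 0)
    {α : Fin (2 * n + 1) → Fin 2} (hα : α p = α q) : Ψ n u α = 0 := by
  have h := h1.applyRc_swap (u := u) hpq α
  rw [applyRc_apply_of_eq _ _ _ hα, ha, hd, zero_mul, zero_mul, zero_add] at h
  exact (mul_eq_zero.mp h.symm).resolve_left hr

theorem PsiP1.eq_zero_of_antiparallel (h1 : PsiP1 τ Ψ) (hpq : (q : ℕ) = p + 1)
    (hb : bv τ (u p - u q) = 0) (hc : cv τ (u p - u q) = 0) (hr : rv τ (u p - u q) ≠ 0)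
    {α : Fin (2 * n + 1) → Fin 2} (hα : α p ≠ α q) : Ψ n u α = 0 := by
  have h := h1.applyRc_swap (u := u) hpq α
  rw [applyRc_apply_of_ne _ _ _ hα, hb, hc, zero_mul, zero_mul, zero_add] at h
  exact (mul_eq_zero.mp h.symm).resolve_left hr

theorem PsiP1.comp_swap_eq (h1 : PsiP1 τ Ψ) (hpq : (q : ℕ) = p + 1)
    (hbc : bv τ (u q - u p) = -cv τ (u q - u p)) (hc : cv τ (u q - u p) ≠ 0)
    (hswap : Ψ n (u ∘ Equiv.swap p q) = 0) (α : Fin (2 * n + 1) → Fin 2) :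
    Ψ n u (α ∘ Equiv.swap p q) = Ψ n u α := by
  by_cases hα : α p = α q
  · rw [Equiv.comp_swap_eq_update, hα, Function.update_eq_self, ← hα, Function.update_eq_self]
  · have h : applyRc τ (u q - u p) p q (Ψ n u) α = rv τ (u q - u p) * Ψ n (u ∘ Equiv.swap p q) α :=
      congrFun (h1 n u p q hpq) α
    rw [applyRc_apply_of_ne _ _ _ hα, hbc, hswap, Pi.zero_apply, mul_zero] at h
    refine (mul_left_cancel₀ hc ?_).symm
    linear_combination h

theorem PsiP3.eq_zero_of_update_add_pi (h3 : PsiP3 τ Ψ) {k : Fin (2 * n + 1)}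
    (h : Ψ n (Function.update u k (u k + Real.pi)) = 0) : Ψ n u = 0 := by
  funext α
  refine (mul_eq_zero.mp (congrFun ((h3 n u k).1.symm.trans h) α)).resolve_left
    (Finset.prod_ne_zero_iff.mpr fun j _ => ?_)
  split_ifs <;> norm_num

theorem PsiP4.eq_zero_of_wheel_mod_pi (h4 : PsiP4 Ψ) (h3 : PsiP3 τ Ψ) {k : Fin (2 * n + 1)}
    (hpq : p < q) (hqk : q < k) (hq : u q = u p + 2 * ηc) (hk : u k = u p + ηc) : Ψ n u = 0 := by
  refine h3.eq_zero_of_update_add_pi (k := k) (h4 n _ ⟨p, q, k, hpq, hqk, ?_, ?_⟩)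
  · rw [Function.update_of_ne hqk.ne, Function.update_of_ne (hpq.trans hqk).ne, hq]
  · rw [Function.update_self, Function.update_of_ne (hpq.trans hqk).ne, hk, ηc]
    ring

end Exchange

section DimerPairing

/-- The first site of the `i`-th pair of neighbouring sites in a chain of `2n + 1` sites. -/
def pairLeft {n : ℕ} (i : Fin n) : Fin (2 * n + 1) := ⟨2 * i, by omega⟩

/-- The second site of the `i`-th pair of neighbouring sites in a chain of `2n + 1` sites. -/
def pairRight {n : ℕ} (i : Fin n) : Fin (2 * n + 1) := ⟨2 * i + 1, by omega⟩

/-- The bilinear pairing of `ψ` with the product vector `κ₁ ⊗ ⋯ ⊗ κₙ ⊗ b`, where `κ i` lives on the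
`i`-th pair of sites and `b` on the last site. It covers `Zfun` and both signs of `Zbarfun`. -/
def dimerPairing {R S : Type*} [CommSemiring R] [Fintype S] {n : ℕ} (κ : Fin n → S → S → R)
    (b : S → R) (ψ : (Fin (2 * n + 1) → S) → R) : R :=
  ∑ α, (∏ m, κ m (α (pairLeft m)) (α (pairRight m))) * b (α (Fin.last (2 * n))) * ψ α

theorem pairLeft_lt_pairRight {n : ℕ} (i : Fin n) : pairLeft i < pairRight i :=
  Fin.mk_lt_mk.mpr (Nat.lt_succ_self _)

theorem pairRight_lt_last {n : ℕ} (i : Fin n) : pairRight i < Fin.last (2 * n) :=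
  Fin.mk_lt_mk.mpr (by omega)

theorem swap_pair_pairLeft_of_ne {n : ℕ} {i m : Fin n} (h : m ≠ i) :
    Equiv.swap (pairLeft i) (pairRight i) (pairLeft m) = pairLeft m := by
  refine Equiv.swap_apply_of_ne_of_ne ?_ ?_ <;>
    simp only [pairLeft, pairRight, ne_eq, Fin.ext_iff] at h ⊢ <;> omega

theorem swap_pair_pairRight_of_ne {n : ℕ} {i m : Fin n} (h : m ≠ i) :
    Equiv.swap (pairLeft i) (pairRight i) (pairRight m) = pairRight m := by
  refine Equiv.swap_apply_of_ne_of_ne ?_ ?_ <;>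
    simp only [pairLeft, pairRight, ne_eq, Fin.ext_iff] at h ⊢ <;> omega

theorem swap_pair_last {n : ℕ} (i : Fin n) :
    Equiv.swap (pairLeft i) (pairRight i) (Fin.last (2 * n)) = Fin.last (2 * n) :=
  Equiv.swap_apply_of_ne_of_ne ((pairLeft_lt_pairRight i).trans (pairRight_lt_last i)).ne'
    (pairRight_lt_last i).ne'

theorem dimerPairing_eq_zero {R S : Type*} [CommSemiring R] [Fintype S] {n : ℕ}
    {κ : Fin n → S → S → R} {b : S → R} {ψ : (Fin (2 * n + 1) → S) → R} (i : Fin n)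
    (h : ∀ α, κ i (α (pairLeft i)) (α (pairRight i)) = 0 ∨ ψ α = 0) :
    dimerPairing κ b ψ = 0 := by
  refine Finset.sum_eq_zero fun α _ => ?_
  rcases h α with hκ | hψ
  · rw [Finset.prod_eq_zero (Finset.mem_univ i) hκ, zero_mul, zero_mul]
  · rw [hψ, mul_zero]

theorem prod_dimer_comp_swap {R S : Type*} [CommRing R] {n : ℕ} {κ : Fin n → S → S → R}
    {i : Fin n} (hκ : ∀ s t, κ i t s = -κ i s t) (α : Fin (2 * n + 1) → S) :
    ∏ m, κ m (α (Equiv.swap (pairLeft i) (pairRight i) (pairLeft m)))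
        (α (Equiv.swap (pairLeft i) (pairRight i) (pairRight m))) =
      -∏ m, κ m (α (pairLeft m)) (α (pairRight m)) := by
  rw [← Finset.mul_prod_erase _ _ (Finset.mem_univ i),
    ← Finset.mul_prod_erase _ _ (Finset.mem_univ i), ← neg_mul, Equiv.swap_apply_left,
    Equiv.swap_apply_right, hκ]
  congr 1
  refine Finset.prod_congr rfl fun m hm => ?_
  have hmi := Finset.ne_of_mem_erase hm
  rw [swap_pair_pairLeft_of_ne hmi, swap_pair_pairRight_of_ne hmi]

theorem dimerPairing_comp_swap {R S : Type*} [CommRing R] [Fintype S] {n : ℕ}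
    {κ : Fin n → S → S → R} (b : S → R) (ψ : (Fin (2 * n + 1) → S) → R) {i : Fin n}
    (hκ : ∀ s t, κ i t s = -κ i s t) :
    dimerPairing κ b (fun α => ψ (α ∘ Equiv.swap (pairLeft i) (pairRight i))) =
      -dimerPairing κ b ψ := by
  set σ := Equiv.swap (pairLeft i) (pairRight i) with hσ
  rw [dimerPairing, dimerPairing, ← Finset.sum_neg_distrib,
    ← (σ.arrowCongr (Equiv.refl S)).sum_comp]
  refine Finset.sum_congr rfl fun α _ => ?_
  have hcomp : σ.arrowCongr (Equiv.refl S) α = α ∘ σ := by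
    ext l
    simp [hσ]
  have hinvol : (α ∘ σ) ∘ σ = α := by
    ext l
    simp [hσ]
  rw [hcomp, hinvol]
  simp only [Function.comp_apply, hσ, prod_dimer_comp_swap hκ, swap_pair_last, neg_mul]

end DimerPairing

section ScalarProducts

variable {τ lam : ℂ} {Ψ : PsiFam} {n : ℕ} {x : Fin n → ℂ} {i : Fin n}

theorem Zfun_eq_dimerPairing (τ lam : ℂ) (Ψ : PsiFam) (x : Fin n → ℂ) :
    Zfun τ lam Ψ n x =
      dimerPairing (fun m => chiC τ lam (x m)) (fun s => if s = 0 then 1 else 0)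
        (Ψ n (interleave x)) := rfl

theorem Zbarfun_eq_dimerPairing (τ lam ε : ℂ) (Ψ : PsiFam) (x : Fin n → ℂ) :
    Zbarfun τ lam ε Ψ n x =
      dimerPairing (fun m => chibarC τ lam (x m)) (fun s => if s = 0 then 1 else ε)
        (Ψ n (interleave x)) := rfl

theorem interleave_pairLeft (x : Fin n → ℂ) (i : Fin n) : interleave x (pairLeft i) = x i := by
  simp [interleave, pairLeft]

theorem interleave_pairRight (x : Fin n → ℂ) (i : Fin n) : interleave x (pairRight i) = -x i := by
  have hdiv : (2 * (i : ℕ) + 1) / 2 = i := by omega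
  have hmod : (2 * (i : ℕ) + 1) % 2 = 1 := by omega
  have hlt : 2 * (i : ℕ) + 1 < 2 * n := by omega
  simp [interleave, pairRight, hdiv, hmod, hlt]

theorem interleave_last (x : Fin n → ℂ) : interleave x (Fin.last (2 * n)) = 0 := by
  simp [interleave]

theorem interleave_pairLeft_sub_pairRight (x : Fin n → ℂ) (i : Fin n) :
    interleave x (pairLeft i) - interleave x (pairRight i) = 2 * x i := by
  rw [interleave_pairLeft, interleave_pairRight]
  ring

theorem chiC_self (τ lam y : ℂ) (s : Fin 2) : chiC τ lam y s s = 0 := by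
  fin_cases s <;> simp [chiC]

theorem chibarC_of_ne (τ lam y : ℂ) {s t : Fin 2} (h : s ≠ t) : chibarC τ lam y s t = 0 := by
  rw [chibarC, if_neg fun h' => h (h'.1.trans h'.2.symm),
    if_neg fun h' => h (h'.1.trans h'.2.symm)]

theorem chiC_ηc_swap (τ lam : ℂ) (s t : Fin 2) : chiC τ lam ηc t s = -chiC τ lam ηc s t := by
  have hreflect : ηc - lam - 2 * ηc = -(ηc + lam) := by ring
  simp only [chiC, hreflect, th1_neg, th4_neg]
  fin_cases s <;> fin_cases t <;> simp

theorem PsiP4.interleave_eq_zero (h4 : PsiP4 Ψ) (h3 : PsiP3 τ Ψ) (hx : x i = -ηc) :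
    Ψ n (interleave x) = 0 := by
  refine h4.eq_zero_of_wheel_mod_pi h3 (pairLeft_lt_pairRight i) (pairRight_lt_last i) ?_ ?_
  · rw [interleave_pairLeft, interleave_pairRight, hx]
    ring
  · rw [interleave_pairLeft, interleave_last, hx, neg_add_cancel]

theorem PsiP1.interleave_comp_swap (h1 : PsiP1 τ Ψ) (h3 : PsiP3 τ Ψ) (h4 : PsiP4 Ψ) (hτ : 0 < τ.im)
    (hx : x i = ηc) (α : Fin (2 * n + 1) → Fin 2) :
    Ψ n (interleave x) (α ∘ Equiv.swap (pairLeft i) (pairRight i)) = Ψ n (interleave x) α := by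
  have hdiff : interleave x (pairRight i) - interleave x (pairLeft i) = -(2 * ηc) := by
    rw [← neg_sub, interleave_pairLeft_sub_pairRight, hx]
  refine h1.comp_swap_eq rfl (hdiff ▸ bv_neg_two_mul_ηc τ)
    (hdiff ▸ cv_neg_two_mul_ηc_ne_zero hτ) ?_ α
  refine h4.eq_zero_of_wheel_mod_pi h3 (pairLeft_lt_pairRight i) (pairRight_lt_last i) ?_ ?_
  · rw [Function.comp_apply, Function.comp_apply, Equiv.swap_apply_left, Equiv.swap_apply_right,
      ← sub_eq_iff_eq_add', ← neg_sub, hdiff, neg_neg]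
  · rw [Function.comp_apply, Function.comp_apply, Equiv.swap_apply_left, swap_pair_last,
      interleave_pairRight, interleave_last, hx, neg_add_cancel]

theorem Zfun_eq_zero_of_eq_neg_ηc (h3 : PsiP3 τ Ψ) (h4 : PsiP4 Ψ) (hx : x i = -ηc) :
    Zfun τ lam Ψ n x = 0 := by
  rw [Zfun_eq_dimerPairing, h4.interleave_eq_zero h3 hx]
  exact dimerPairing_eq_zero i fun _ => Or.inr rfl

theorem Zbarfun_eq_zero_of_eq_neg_ηc (h3 : PsiP3 τ Ψ) (h4 : PsiP4 Ψ) (hx : x i = -ηc) (ε : ℂ) :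
    Zbarfun τ lam ε Ψ n x = 0 := by
  rw [Zbarfun_eq_dimerPairing, h4.interleave_eq_zero h3 hx]
  exact dimerPairing_eq_zero i fun _ => Or.inr rfl

theorem Zfun_eq_zero_of_eq_ηc (hτ : 0 < τ.im) (h1 : PsiP1 τ Ψ) (h3 : PsiP3 τ Ψ) (h4 : PsiP4 Ψ)
    (hx : x i = ηc) : Zfun τ lam Ψ n x = 0 := by
  have hanti := dimerPairing_comp_swap (κ := fun m => chiC τ lam (x m))
    (fun s => if s = 0 then 1 else 0) (Ψ n (interleave x)) (i := i) (hx ▸ chiC_ηc_swap τ lam)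
  simp only [h1.interleave_comp_swap h3 h4 hτ hx] at hanti
  exact self_eq_neg.mp hanti

theorem Zfun_eq_zero_of_bv_eq_zero_of_cv_eq_zero (h1 : PsiP1 τ Ψ) (hb : bv τ (2 * x i) = 0)
    (hc : cv τ (2 * x i) = 0) (hr : rv τ (2 * x i) ≠ 0) : Zfun τ lam Ψ n x = 0 := by
  rw [← interleave_pairLeft_sub_pairRight] at hb hc hr
  rw [Zfun_eq_dimerPairing]
  refine dimerPairing_eq_zero i fun α => ?_
  rcases eq_or_ne (α (pairLeft i)) (α (pairRight i)) with hα | hα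
  · exact Or.inl (hα ▸ chiC_self τ lam (x i) _)
  · exact Or.inr (h1.eq_zero_of_antiparallel rfl hb hc hr hα)

theorem Zbarfun_eq_zero_of_av_eq_zero_of_dv_eq_zero (h1 : PsiP1 τ Ψ) (ha : av τ (2 * x i) = 0)
    (hd : dv τ (2 * x i) = 0) (hr : rv τ (2 * x i) ≠ 0) (ε : ℂ) : Zbarfun τ lam ε Ψ n x = 0 := by
  rw [← interleave_pairLeft_sub_pairRight] at ha hd hr
  rw [Zbarfun_eq_dimerPairing]
  refine dimerPairing_eq_zero i fun α => ?_
  rcases eq_or_ne (α (pairLeft i)) (α (pairRight i)) with hα | hα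
  · exact Or.inr (h1.eq_zero_of_parallel rfl ha hd hr hα)
  · exact Or.inl (chibarC_of_ne τ lam (x i) hα)

theorem Zfun_eq_zero_of_eq_neg_β4c (hτ : 0 < τ.im) (h1 : PsiP1 τ Ψ) (hx : x i = -β4c τ) :
    Zfun τ lam Ψ n x = 0 := by
  have hdiff : 2 * x i = -(2 * β4c τ) := by rw [hx, mul_neg]
  exact Zfun_eq_zero_of_bv_eq_zero_of_cv_eq_zero h1 (hdiff ▸ bv_neg_two_mul_β4c τ)
    (hdiff ▸ cv_neg_two_mul_β4c τ) (hdiff ▸ rv_neg_two_mul_β4c_ne_zero hτ)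

theorem Zfun_eq_zero_of_eq_neg_β3c (hτ : 0 < τ.im) (h1 : PsiP1 τ Ψ) (hx : x i = -β3c τ) :
    Zfun τ lam Ψ n x = 0 := by
  have hdiff : 2 * x i = -(2 * β4c τ) - Real.pi := by rw [hx, mul_neg, neg_two_mul_β3c]
  refine Zfun_eq_zero_of_bv_eq_zero_of_cv_eq_zero (i := i) h1 ?_ ?_ ?_ <;> rw [hdiff]
  · rw [bv_sub_pi, bv_neg_two_mul_β4c, neg_zero]
  · rw [cv_sub_pi, cv_neg_two_mul_β4c]
  · rw [rv_sub_pi]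
    exact neg_ne_zero.mpr (rv_neg_two_mul_β4c_ne_zero hτ)

theorem Zbarfun_eq_zero_of_eq_neg_β2c (hτ : 0 < τ.im) (h1 : PsiP1 τ Ψ) (hx : x i = -β2c) (ε : ℂ) :
    Zbarfun τ lam ε Ψ n x = 0 := by
  have hdiff : 2 * x i = -(2 * ηc) - Real.pi := by rw [hx, mul_neg, neg_two_mul_β2c]
  refine Zbarfun_eq_zero_of_av_eq_zero_of_dv_eq_zero (i := i) h1 ?_ ?_ ?_ ε <;> rw [hdiff]
  · rw [av_sub_pi, av_neg_two_mul_ηc, neg_zero]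
  · rw [dv_sub_pi, dv_neg_two_mul_ηc]
  · rw [rv_sub_pi]
    exact neg_ne_zero.mpr (rv_neg_two_mul_ηc_ne_zero hτ)

end ScalarProducts

theorem stmt12_general (τ lam : ℂ) (hτ : 0 < τ.im) (Ψ : PsiFam) (h1 : PsiP1 τ Ψ) (h3 : PsiP3 τ Ψ)
    (h4 : PsiP4 Ψ) (n : ℕ) (x : Fin n → ℂ) (i : Fin n) :
    Zfun τ lam Ψ n (Function.update x i (-ηc)) = 0 ∧
    Zfun τ lam Ψ n (Function.update x i ηc) = 0 ∧
    Zfun τ lam Ψ n (Function.update x i (-(β3c τ))) = 0 ∧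
    Zfun τ lam Ψ n (Function.update x i (-(β4c τ))) = 0 ∧
    ∀ ε : ℂ, Zbarfun τ lam ε Ψ n (Function.update x i (-ηc)) = 0 ∧
      Zbarfun τ lam ε Ψ n (Function.update x i (-β2c)) = 0 :=
  have hx (y : ℂ) : Function.update x i y i = y := Function.update_self ..
  ⟨Zfun_eq_zero_of_eq_neg_ηc h3 h4 (hx _), Zfun_eq_zero_of_eq_ηc hτ h1 h3 h4 (hx _),
    Zfun_eq_zero_of_eq_neg_β3c hτ h1 (hx _), Zfun_eq_zero_of_eq_neg_β4c hτ h1 (hx _),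
    fun ε => ⟨Zbarfun_eq_zero_of_eq_neg_ηc h3 h4 (hx _) ε,
      Zbarfun_eq_zero_of_eq_neg_β2c hτ h1 (hx _) ε⟩⟩

theorem stmt12 (τ lam : ℂ) (hτ : 0 < τ.im) (Ψ : PsiFam)
    (hent : PsiEntire Ψ) (h1 : PsiP1 τ Ψ) (h3 : PsiP3 τ Ψ) (h4 : PsiP4 Ψ)
    (n : ℕ) (hn : 1 ≤ n) (x : Fin n → ℂ) (i : Fin n) :
    Zfun τ lam Ψ n (Function.update x i (-ηc)) = 0 ∧
    Zfun τ lam Ψ n (Function.update x i ηc) = 0 ∧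
    Zfun τ lam Ψ n (Function.update x i (-(β3c τ))) = 0 ∧
    Zfun τ lam Ψ n (Function.update x i (-(β4c τ))) = 0 ∧
    Zbarfun τ lam 1 Ψ n (Function.update x i (-ηc)) = 0 ∧
    Zbarfun τ lam 1 Ψ n (Function.update x i (-β2c)) = 0 ∧
    Zbarfun τ lam (-1) Ψ n (Function.update x i (-ηc)) = 0 ∧
    Zbarfun τ lam (-1) Ψ n (Function.update x i (-β2c)) = 0 := by
  obtain ⟨hηneg, hη, hβ3, hβ4, hbar⟩ := stmt12_general τ lam hτ Ψ h1 h3 h4 n x i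
  exact ⟨hηneg, hη, hβ3, hβ4, (hbar 1).1, (hbar 1).2, (hbar (-1)).1, (hbar (-1)).2⟩

end
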